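/- If h, g ∈ A satisfy D(h) = g·h, then h lies in F, i.e. h is a constant polynomial: h ∈ Set.range (C : F → A). In other words, there are no non-trivial Darboux polynomials in the differential polynomial ring F{Y_{ij}}. -/

import Mathlib

open MvPolynomial

/-- The ring of differential polynomials `A = F{Y_ij}`: multivariate polynomials over `F`
in the variables `Y i j k` (with `Y i j := Y i j 0`). -/
abbrev Agen (F : Type*) [Field F] (n : ℕ) : Type _ :=
  MvPolynomial (Fin n × Fin n × ℕ) F

/-!
The partial derivatives satisfy `[∂/∂Y_{k+1}, D] = ∂/∂Y_k`. If `h` involves a variable `Y_k` but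
not `Y_{k+1}`, applying `∂/∂Y_{k+1}` to `D h = g * h` therefore gives `∂h/∂Y_k = (∂g/∂Y_{k+1}) * h`,
so `h` divides a nonzero polynomial whose degree in `Y_k` is smaller than its own. Such a variable
exists as soon as `h` is not constant, because `h` involves only finitely many variables and the
shift `Y_k ↦ Y_{k+1}` permutes no nonempty finite set of them.
-/

section PartialDerivative

variable {σ R : Type*} [CommSemiring R] {i : σ} {p : MvPolynomial σ R}

theorem degreeOf_pderiv_lt (hi : i ∈ p.vars) : degreeOf i (pderiv i p) < degreeOf i p := by
  have hpos : 0 < degreeOf i p := Nat.pos_of_ne_zero (mem_vars_iff_degreeOf_ne_zero.mp hi)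
  refine (degreeOf_lt_iff hpos).mpr fun m hm => ?_
  have hm' : m + Finsupp.single i 1 ∈ p.support := by
    rw [mem_support_iff, coeff_pderiv] at hm
    exact mem_support_iff.mpr (left_ne_zero_of_mul hm)
  simpa using monomial_le_degreeOf i hm'

theorem pderiv_eq_zero_of_dvd_pderiv [NoZeroDivisors R] (hp : p ∣ pderiv i p) :
    pderiv i p = 0 := by
  by_contra hne
  have hlt := degreeOf_pderiv_lt (not_imp_comm.mp pderiv_eq_zero_of_notMem_vars hne)
  obtain ⟨q, hq⟩ := hp
  rw [hq] at hne hlt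
  rw [degreeOf_mul_eq (left_ne_zero_of_mul hne) (right_ne_zero_of_mul hne)] at hlt
  exact (Nat.le_add_right _ _).not_gt hlt

theorem pderiv_eq_zero_iff_notMem_vars [NoZeroDivisors R] [CharZero R] :
    pderiv i p = 0 ↔ i ∉ p.vars := by
  refine ⟨fun hp hi => ?_, pderiv_eq_zero_of_notMem_vars⟩
  obtain ⟨m, hm, him⟩ := (mem_vars_iff_mem_support i).mp hi
  have hcoeff := coeff_pderiv (i := i) p (m - Finsupp.single i 1)
  rw [hp, coeff_zero, Finsupp.sub_add_single_one_cancel (Finsupp.mem_support_iff.mp him)] at hcoeff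
  exact mul_ne_zero (mem_support_iff.mp hm) (Nat.cast_add_one_ne_zero _) hcoeff.symm

end PartialDerivative

theorem derivation_ext_C_X {σ R M : Type*} [CommRing R] [AddCommGroup M]
    [Module (MvPolynomial σ R) M] {D₁ D₂ : Derivation ℤ (MvPolynomial σ R) M}
    (hC : ∀ a, D₁ (C a) = D₂ (C a)) (hX : ∀ i, D₁ (X i) = D₂ (X i)) : D₁ = D₂ := by
  ext p
  induction p using MvPolynomial.induction_on with
  | C a => exact hC a
  | add p q hp hq => rw [map_add, map_add, hp, hq]
  | mul_X p i hp => rw [Derivation.leibniz, Derivation.leibniz, hp, hX]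

theorem lie_pderiv_shift {σ R : Type*} [CommRing R] {d : R → R} {s : σ → σ}
    (hs : Function.Injective s) {D : Derivation ℤ (MvPolynomial σ R) (MvPolynomial σ R)}
    (hD_C : ∀ a, D (C a) = C (d a)) (hD_X : ∀ i, D (X i) = X (s i)) (i : σ) :
    ⁅(pderiv (R := R) (s i)).restrictScalars ℤ, D⁆ = (pderiv i).restrictScalars ℤ := by
  classical
  refine derivation_ext_C_X (fun a => ?_) (fun j => ?_)
  · simp [Derivation.commutator_apply, hD_C]
  · simp [Derivation.commutator_apply, hD_X, pderiv_X, Pi.single_apply, hs.eq_iff, apply_ite D]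

theorem pderiv_eq_zero_of_dvd_derivation {σ R : Type*} [CommRing R] [NoZeroDivisors R] {d : R → R}
    {s : σ → σ} (hs : Function.Injective s)
    {D : Derivation ℤ (MvPolynomial σ R) (MvPolynomial σ R)}
    (hD_C : ∀ a, D (C a) = C (d a)) (hD_X : ∀ i, D (X i) = X (s i))
    {h : MvPolynomial σ R} (hDh : h ∣ D h) {i : σ} (hi : pderiv (s i) h = 0) :
    pderiv i h = 0 := by
  obtain ⟨g, hg⟩ := hDh
  refine pderiv_eq_zero_of_dvd_pderiv ⟨pderiv (s i) g, ?_⟩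
  calc pderiv i h = pderiv (s i) (D h) - D (pderiv (s i) h) :=
        (DFunLike.congr_fun (lie_pderiv_shift hs hD_C hD_X i) h).symm
    _ = h * pderiv (s i) g := by rw [hg, pderiv_mul, hi, map_zero, zero_mul, zero_add, sub_zero]

theorem subset_periodicPts_of_mapsTo {α : Type*} {f : α → α} {t : Set α} (ht : t.Finite)
    (hf : Set.InjOn f t) (hmaps : Set.MapsTo f t t) : t ⊆ Function.periodicPts f := fun x hx => by
  have := ht.to_subtype
  have hval : Function.Semiconj Subtype.val (hmaps.restrict f t t) f := fun _ => rfl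
  exact hval.mapsTo_periodicPts ((hmaps.restrict_inj.mpr hf).mem_periodicPts ⟨x, hx⟩)

theorem periodicPts_eq_empty_of_lt {α β : Type*} [Preorder β] {f : α → α} (r : α → β)
    (hr : ∀ x, r x < r (f x)) : Function.periodicPts f = ∅ := by
  refine Set.eq_empty_of_forall_notMem fun x ⟨m, hm, hx⟩ => ?_
  have hmono : StrictMono fun k => r (f^[k] x) :=
    strictMono_nat_of_lt_succ fun k => by simpa only [Function.iterate_succ_apply'] using hr _
  exact (hmono hm).ne (congrArg r hx.eq.symm)

/-- The map `(i, j, k) ↦ (i, j, k + 1)` through which `D` acts on the variables `Y_{ij,k}`. -/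
def orderShift {ι κ : Type*} : ι × κ × ℕ → ι × κ × ℕ :=
  Prod.map id (Prod.map id Nat.succ)

theorem orderShift_injective {ι κ : Type*} : Function.Injective (orderShift (ι := ι) (κ := κ)) :=
  Function.injective_id.prodMap (Function.injective_id.prodMap Nat.succ_injective)

theorem periodicPts_orderShift {ι κ : Type*} :
    Function.periodicPts (orderShift (ι := ι) (κ := κ)) = ∅ :=
  periodicPts_eq_empty_of_lt (fun u => u.2.2) fun u => u.2.2.lt_succ_self

/-- The derivation given by an additive map satisfying the Leibniz rule. It is bundled over `ℤ`
because it need not be linear over a larger ring of coefficients. -/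
def derivationOfLeibniz {A : Type*} [CommRing A] {D : A → A}
    (hD_add : ∀ a b, D (a + b) = D a + D b) (hD_mul : ∀ a b, D (a * b) = D a * b + a * D b) :
    Derivation ℤ A A :=
  .mk' (AddMonoidHom.mk' D hD_add).toIntLinearMap fun a b =>
    (hD_mul a b).trans (by rw [add_comm, mul_comm (D a)]; rfl)

theorem stmt_3_general {σ R : Type*} [CommRing R] [IsDomain R] [CharZero R] {d : R → R}
    {s : σ → σ} (hs : Function.Injective s) (hs_per : Function.periodicPts s = ∅)
    {D : Derivation ℤ (MvPolynomial σ R) (MvPolynomial σ R)}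
    (hD_C : ∀ a, D (C a) = C (d a)) (hD_X : ∀ i, D (X i) = X (s i))
    {h : MvPolynomial σ R} (hDh : h ∣ D h) : h ∈ Set.range (C : R → MvPolynomial σ R) := by
  have hmaps : Set.MapsTo s h.vars h.vars := fun i hi => by
    contrapose! hi
    exact pderiv_eq_zero_iff_notMem_vars.mp
      (pderiv_eq_zero_of_dvd_derivation hs hD_C hD_X hDh (pderiv_eq_zero_of_notMem_vars hi))
  have hvars : h.vars = ∅ := by
    rw [← Finset.coe_eq_empty, ← Set.subset_empty_iff, ← hs_per]
    exact subset_periodicPts_of_mapsTo h.vars.finite_toSet hs.injOn hmaps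
  exact ⟨_, (vars_eq_empty_iff_eq_C.mp hvars).symm⟩

/-- There are no non-trivial Darboux polynomials in `F{Y_ij}`:
if `D h = g * h` then `h` is a constant polynomial. -/
theorem stmt_3
    {F : Type*} [Field F] [CharZero F] (d : F → F)
    (hd_add : ∀ a b : F, d (a + b) = d a + d b)
    (hd_mul : ∀ a b : F, d (a * b) = d a * b + a * d b)
    (n : ℕ) (hn : 1 ≤ n)
    (D : Agen F n → Agen F n)
    (hD_add : ∀ a b, D (a + b) = D a + D b)
    (hD_mul : ∀ a b, D (a * b) = D a * b + a * D b)
    (hD_C : ∀ f : F, D (C f) = C (d f))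
    (hD_Y : ∀ (i j : Fin n) (k : ℕ),
      D (X (i, j, k)) = X (i, j, k + 1))
    (h g : Agen F n) (hDh : D h = g * h) :
    h ∈ Set.range (C : F → Agen F n) := by
  exact stmt_3_general (D := derivationOfLeibniz hD_add hD_mul) orderShift_injective
    periodicPts_orderShift hD_C (fun ⟨i, j, k⟩ => hD_Y i j k) ⟨g, hDh.trans (mul_comm g h)⟩
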